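/- Under the multigrid setting — levels 0, …, ℓ with dimensions N_0, …, N_ℓ; monolithic level operators C_i with invertible blocks C_{i,j}; monolithic preconditioners W_i with invertible blocks W_{i,j}; smoothers S_i = I − W_i⁻¹ C_i with blocks S_{i,j} = I − W_{i,j}⁻¹ C_{i,j}; prolongations 𝐏_i = I_s ⊗ P_i and restrictions 𝐑_i = I_s ⊗ R_i; and the recursively defined iteration matrices T_0 = 0, T_i = S_i^{ν_1} ( I − 𝐏_i (I − T_{i−1}^γ) C_{i−1}⁻¹ 𝐑_i C_i ) S_i^{ν_2} together with the per-stage iteration matrices T_{0,j} = 0, T_{i,j} = S_{i,j}^{ν_1} ( I − P_i (I − T_{i−1,j}^γ) C_{i−1,j}⁻¹ R_i C_{i,j} ) S_{i,j}^{ν_2} — the spectral radius of the monolithic multigrid iteration on the finest level satisfies ρ(T_ℓ) = max_{1 ≤ j ≤ s} ρ(T_{ℓ,j}); in particular, ρ(T_ℓ) < 1 if and only if ρ(T_{ℓ,j}) < 1 for every characteristic stage j, i.e. the monolithic multigrid method converges if and only if the underlying multigrid method converges for each characteristic stage. -/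

import Mathlib

open Matrix Kronecker

/-- Block-diagonal matrix indexed by `Fin s × Fin N` whose `i`-th diagonal block is `Y i`. -/
def blockDiagFst {m n : ℕ} (Y : Fin m → Matrix (Fin n) (Fin n) ℂ) :
    Matrix (Fin m × Fin n) (Fin m × Fin n) ℂ :=
  Matrix.of fun p q => if p.1 = q.1 then Y p.1 p.2 q.2 else 0

/-!
Conjugation by `X ⊗ I` turns monolithic matrices into block-diagonal ones, so the monolithic
matrices with respect to a fixed `X` are closed under products (rectangular ones included),
differences, powers and inverses, all of which act blockwise. A multigrid step is built from its
data by these operations only. Hence, by induction on the level, `T ℓ` is monolithic with blocks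
`T_{ℓ,j}`, and the spectrum of a monolithic matrix is the union of the spectra of its blocks because
its determinant is the product of theirs.
-/

section Monolithic

variable {ι l m n K : Type*} [DecidableEq ι] [CommRing K]

/-- The block-diagonal matrix with blocks `Y j`, for `j : ι`. The block index comes first, as in
`blockDiagFst` and unlike in `Matrix.blockDiagonal`; the blocks may be rectangular, since
prolongations and restrictions have to be covered. -/
def stageDiagonal (Y : ι → Matrix m n K) : Matrix (ι × m) (ι × n) K :=
  reindex (.prodComm m ι) (.prodComm n ι) (blockDiagonal Y)

theorem stageDiagonal_sub (Y Z : ι → Matrix m n K) :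
    stageDiagonal (fun j => Y j - Z j) = stageDiagonal Y - stageDiagonal Z :=
  congrArg (reindex (.prodComm m ι) (.prodComm n ι)) (blockDiagonal_sub Y Z)

theorem stageDiagonal_const (A : Matrix m n K) :
    stageDiagonal (fun _ : ι => A) = (1 : Matrix ι ι K) ⊗ₖ A := by
  classical exact (one_kronecker A).symm

variable [Fintype ι]

theorem stageDiagonal_mul [Fintype m] (Y : ι → Matrix l m K) (Z : ι → Matrix m n K) :
    stageDiagonal (fun j => Y j * Z j) = stageDiagonal Y * stageDiagonal Z := by
  simp only [stageDiagonal, blockDiagonal_mul, reindex_apply, submatrix_mul_equiv]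

theorem det_stageDiagonal [Fintype m] [DecidableEq m] (Y : ι → Matrix m m K) :
    (stageDiagonal Y).det = ∏ j, (Y j).det := by
  rw [stageDiagonal, det_reindex_self, det_blockDiagonal]

theorem isUnit_det_kronecker_one [Fintype m] [DecidableEq m] {X : Matrix ι ι K}
    (hX : IsUnit X.det) : IsUnit (X ⊗ₖ (1 : Matrix m m K)).det := by
  simpa only [det_kronecker, det_one, one_pow, mul_one] using hX.pow (Fintype.card m)

/-- `Y` is monolithic with respect to `X`, with blocks `Yb j`. This is the equation
`(X⁻¹ ⊗ I) Y (X ⊗ I) = blockdiag(Yb)` with `X⁻¹ ⊗ I` moved to the right-hand side, so that products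
and differences can be treated without inverting `X`. -/
def IsMonolithic [Fintype m] [DecidableEq m] [Fintype n] [DecidableEq n] (X : Matrix ι ι K)
    (Y : Matrix (ι × m) (ι × n) K) (Yb : ι → Matrix m n K) : Prop :=
  Y * (X ⊗ₖ (1 : Matrix n n K)) = (X ⊗ₖ (1 : Matrix m m K)) * stageDiagonal Yb

namespace IsMonolithic

variable [Fintype l] [DecidableEq l] [Fintype m] [DecidableEq m] [Fintype n] [DecidableEq n]
  {X : Matrix ι ι K}

theorem of_conj_eq (hX : IsUnit X.det) {Y : Matrix (ι × m) (ι × n) K} {Yb : ι → Matrix m n K}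
    (h : (X⁻¹ ⊗ₖ (1 : Matrix m m K)) * Y * (X ⊗ₖ (1 : Matrix n n K)) = stageDiagonal Yb) :
    IsMonolithic X Y Yb := by
  have cancel : (X ⊗ₖ (1 : Matrix m m K)) * (X⁻¹ ⊗ₖ (1 : Matrix m m K)) = 1 := by
    rw [← mul_kronecker_mul, mul_nonsing_inv X hX, Matrix.one_mul, one_kronecker_one]
  rw [IsMonolithic, ← h, ← Matrix.mul_assoc, ← Matrix.mul_assoc, cancel, Matrix.one_mul]

theorem one_kronecker (X : Matrix ι ι K) (A : Matrix m n K) :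
    IsMonolithic X ((1 : Matrix ι ι K) ⊗ₖ A) fun _ => A := by
  rw [IsMonolithic, stageDiagonal_const, ← mul_kronecker_mul, ← mul_kronecker_mul, Matrix.one_mul,
    Matrix.mul_one, Matrix.one_mul, Matrix.mul_one]

theorem zero (X : Matrix ι ι K) : IsMonolithic X (0 : Matrix (ι × m) (ι × n) K) fun _ => 0 := by
  simpa only [kronecker_zero] using one_kronecker X (0 : Matrix m n K)

theorem one (X : Matrix ι ι K) : IsMonolithic X (1 : Matrix (ι × m) (ι × m) K) fun _ => 1 := by
  simpa only [one_kronecker_one] using one_kronecker X (1 : Matrix m m K)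

theorem algebraMap (X : Matrix ι ι K) (r : K) :
    IsMonolithic X (algebraMap K (Matrix (ι × m) (ι × m) K) r) fun _ => algebraMap K _ r := by
  simpa only [Algebra.algebraMap_eq_smul_one, kronecker_smul, one_kronecker_one] using
    one_kronecker X (r • (1 : Matrix m m K))

theorem sub {Y Z : Matrix (ι × m) (ι × n) K} {Yb Zb : ι → Matrix m n K}
    (hY : IsMonolithic X Y Yb) (hZ : IsMonolithic X Z Zb) :
    IsMonolithic X (Y - Z) fun j => Yb j - Zb j := by
  rw [IsMonolithic, stageDiagonal_sub, Matrix.sub_mul, Matrix.mul_sub, hY, hZ]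

theorem mul {Y : Matrix (ι × l) (ι × m) K} {Yb : ι → Matrix l m K}
    {Z : Matrix (ι × m) (ι × n) K} {Zb : ι → Matrix m n K}
    (hY : IsMonolithic X Y Yb) (hZ : IsMonolithic X Z Zb) :
    IsMonolithic X (Y * Z) fun j => Yb j * Zb j := by
  rw [IsMonolithic, stageDiagonal_mul, Matrix.mul_assoc, hZ, ← Matrix.mul_assoc, hY,
    Matrix.mul_assoc]

variable {Y : Matrix (ι × m) (ι × m) K} {Yb : ι → Matrix m m K}

theorem pow (hY : IsMonolithic X Y Yb) (k : ℕ) : IsMonolithic X (Y ^ k) fun j => Yb j ^ k := by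
  induction k with
  | zero => simpa only [pow_zero] using one X
  | succ k ih => simpa only [pow_succ] using ih.mul hY

theorem det_eq (hX : IsUnit X.det) (hY : IsMonolithic X Y Yb) : Y.det = ∏ j, (Yb j).det := by
  apply (isUnit_det_kronecker_one (m := m) hX).mul_right_cancel
  rw [← det_mul, hY, det_mul, det_stageDiagonal, mul_comm]

theorem isUnit_iff (hX : IsUnit X.det) (hY : IsMonolithic X Y Yb) :
    IsUnit Y ↔ ∀ j, IsUnit (Yb j) := by
  simp only [isUnit_iff_isUnit_det, hY.det_eq hX, IsUnit.prod_univ_iff]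

theorem inv (hX : IsUnit X.det) (hY : IsMonolithic X Y Yb) (hYb : ∀ j, IsUnit (Yb j).det) :
    IsMonolithic X Y⁻¹ fun j => (Yb j)⁻¹ := by
  have hY_det : IsUnit Y.det :=
    (isUnit_iff_isUnit_det Y).1 <| (hY.isUnit_iff hX).2 fun j => (isUnit_iff_isUnit_det _).2 (hYb j)
  have cancel : stageDiagonal Yb * stageDiagonal (fun j => (Yb j)⁻¹) = 1 := by
    simp only [← stageDiagonal_mul, mul_nonsing_inv _ (hYb _), stageDiagonal_const,
      one_kronecker_one]
  have hYV : Y * ((X ⊗ₖ 1) * stageDiagonal fun j => (Yb j)⁻¹) = X ⊗ₖ 1 := by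
    rw [← Matrix.mul_assoc, hY, Matrix.mul_assoc, cancel, Matrix.mul_one]
  rw [IsMonolithic, ← hYV, nonsing_inv_mul_cancel_left _ _ hY_det, hYV]

theorem spectrum_eq (hX : IsUnit X.det) (hY : IsMonolithic X Y Yb) :
    spectrum K Y = ⋃ j, spectrum K (Yb j) := by
  ext r
  have resolvent_isUnit_iff := ((IsMonolithic.algebraMap X r).sub hY).isUnit_iff hX
  simp only [spectrum.mem_iff, Set.mem_iUnion, resolvent_isUnit_iff, not_forall]

end IsMonolithic

end Monolithic

section Multigrid

variable {ι m n : Type*} [Fintype ι] [DecidableEq ι] [Fintype m] [DecidableEq m]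
  [Fintype n] [DecidableEq n]

/-- The iteration matrix on a level with operator `C` and preconditioner `W`, built from the
iteration matrix `T₀` and the operator `C₀` of the next coarser level: `ν₂` smoothing sweeps, a
coarse-grid correction in which `γ` coarse iterations replace the exact solve, and `ν₁` smoothing
sweeps. -/
noncomputable def multigridStep {K : Type*} [CommRing K] (ν₁ ν₂ γ : ℕ) (W C : Matrix m m K)
    (P : Matrix m n K) (R : Matrix n m K) (C₀ T₀ : Matrix n n K) : Matrix m m K :=
  (1 - W⁻¹ * C) ^ ν₁ * (1 - P * (1 - T₀ ^ γ) * C₀⁻¹ * R * C) * (1 - W⁻¹ * C) ^ ν₂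

theorem IsMonolithic.multigridStep {K : Type*} [CommRing K] {X : Matrix ι ι K}
    (hX : IsUnit X.det) (ν₁ ν₂ γ : ℕ)
    {W C : Matrix (ι × m) (ι × m) K} {Wb Cb : ι → Matrix m m K}
    {P : Matrix (ι × m) (ι × n) K} {Pb : ι → Matrix m n K}
    {R : Matrix (ι × n) (ι × m) K} {Rb : ι → Matrix n m K}
    {C₀ T₀ : Matrix (ι × n) (ι × n) K} {C₀b T₀b : ι → Matrix n n K}
    (hW : IsMonolithic X W Wb) (hWb : ∀ j, IsUnit (Wb j).det) (hC : IsMonolithic X C Cb)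
    (hP : IsMonolithic X P Pb) (hR : IsMonolithic X R Rb)
    (hC₀ : IsMonolithic X C₀ C₀b) (hC₀b : ∀ j, IsUnit (C₀b j).det)
    (hT₀ : IsMonolithic X T₀ T₀b) :
    IsMonolithic X (multigridStep ν₁ ν₂ γ W C P R C₀ T₀)
      fun j => multigridStep ν₁ ν₂ γ (Wb j) (Cb j) (Pb j) (Rb j) (C₀b j) (T₀b j) := by
  have smoother := (one X).sub ((hW.inv hX hWb).mul hC)
  have coarseIteration := (one X).sub (hT₀.pow γ)
  have coarseCorrection := (one X).sub
    ((((hP.mul coarseIteration).mul (hC₀.inv hX hC₀b)).mul hR).mul hC)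
  exact ((smoother.pow ν₁).mul coarseCorrection).mul (smoother.pow ν₂)

variable {𝕜 : Type*} [NormedField 𝕜] {X : Matrix ι ι 𝕜}

theorem IsMonolithic.spectralRadius_eq (hX : IsUnit X.det)
    {Y : Matrix (ι × m) (ι × m) 𝕜} {Yb : ι → Matrix m m 𝕜} (hY : IsMonolithic X Y Yb) :
    spectralRadius 𝕜 Y = ⨆ j, spectralRadius 𝕜 (Yb j) := by
  simp only [spectralRadius, hY.spectrum_eq hX, iSup_iUnion]

theorem IsMonolithic.spectralRadius_lt_one_iff (hX : IsUnit X.det)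
    {Y : Matrix (ι × m) (ι × m) 𝕜} {Yb : ι → Matrix m m 𝕜} (hY : IsMonolithic X Y Yb) :
    spectralRadius 𝕜 Y < 1 ↔ ∀ j, spectralRadius 𝕜 (Yb j) < 1 := by
  rw [hY.spectralRadius_eq hX, ← Finset.sup_univ_eq_iSup, Finset.sup_lt_iff zero_lt_one]
  simp only [Finset.mem_univ, true_imp_iff]

theorem stmt16_general (hX : IsUnit X.det)
    {ℓ : ℕ} {N : ℕ → Type*} [∀ i, Fintype (N i)] [∀ i, DecidableEq (N i)]
    {C W T : (i : ℕ) → Matrix (ι × N i) (ι × N i) 𝕜}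
    {Cb Wb Tb : (i : ℕ) → ι → Matrix (N i) (N i) 𝕜}
    {P : (i : ℕ) → Matrix (ι × N (i + 1)) (ι × N i) 𝕜}
    {Pb : (i : ℕ) → ι → Matrix (N (i + 1)) (N i) 𝕜}
    {R : (i : ℕ) → Matrix (ι × N i) (ι × N (i + 1)) 𝕜}
    {Rb : (i : ℕ) → ι → Matrix (N i) (N (i + 1)) 𝕜} {ν₁ ν₂ γ : ℕ}
    (hC : ∀ i, i ≤ ℓ → IsMonolithic X (C i) (Cb i)) (hCb : ∀ i, i ≤ ℓ → ∀ j, IsUnit (Cb i j).det)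
    (hW : ∀ i, 1 ≤ i → i ≤ ℓ → IsMonolithic X (W i) (Wb i))
    (hWb : ∀ i, 1 ≤ i → i ≤ ℓ → ∀ j, IsUnit (Wb i j).det)
    (hP : ∀ i, i < ℓ → IsMonolithic X (P i) (Pb i))
    (hR : ∀ i, i < ℓ → IsMonolithic X (R i) (Rb i))
    (hT0 : T 0 = 0)
    (hT : ∀ i, i < ℓ → T (i + 1) =
      multigridStep ν₁ ν₂ γ (W (i + 1)) (C (i + 1)) (P i) (R i) (C i) (T i))
    (hTb0 : ∀ j, Tb 0 j = 0)
    (hTb : ∀ i, i < ℓ → ∀ j, Tb (i + 1) j =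
      multigridStep ν₁ ν₂ γ (Wb (i + 1) j) (Cb (i + 1) j) (Pb i j) (Rb i j) (Cb i j) (Tb i j)) :
    spectralRadius 𝕜 (T ℓ) = ⨆ j, spectralRadius 𝕜 (Tb ℓ j) ∧
      (spectralRadius 𝕜 (T ℓ) < 1 ↔ ∀ j, spectralRadius 𝕜 (Tb ℓ j) < 1) := by
  have hT_monolithic : ∀ i, i ≤ ℓ → IsMonolithic X (T i) (Tb i) := by
    intro i hi
    induction i with
    | zero =>
      rw [hT0, funext hTb0]
      exact .zero X
    | succ i ih =>
      have hi' : i ≤ ℓ := Nat.le_of_succ_le hi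
      have h₁ : 1 ≤ i + 1 := Nat.le_add_left 1 i
      rw [hT i hi, funext (hTb i hi)]
      exact .multigridStep hX ν₁ ν₂ γ (hW _ h₁ hi) (hWb _ h₁ hi) (hC _ hi) (hP i hi) (hR i hi)
        (hC i hi') (hCb i hi') (ih hi')
  have hTℓ := hT_monolithic ℓ le_rfl
  exact ⟨hTℓ.spectralRadius_eq hX, hTℓ.spectralRadius_lt_one_iff hX⟩

end Multigrid

theorem stmt16 (s : ℕ) (hs : 0 < s)
    (X : Matrix (Fin s) (Fin s) ℂ) (hX : IsUnit X.det)
    (ℓ : ℕ) (Nl : ℕ → ℕ) (hNl : ∀ i, i ≤ ℓ → 0 < Nl i)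
    -- monolithic level operators with invertible blocks
    (C : (i : ℕ) → Matrix (Fin s × Fin (Nl i)) (Fin s × Fin (Nl i)) ℂ)
    (Cb : (i : ℕ) → Fin s → Matrix (Fin (Nl i)) (Fin (Nl i)) ℂ)
    (hC : ∀ i, i ≤ ℓ →
      (X⁻¹ ⊗ₖ (1 : Matrix (Fin (Nl i)) (Fin (Nl i)) ℂ)) * C i *
        (X ⊗ₖ (1 : Matrix (Fin (Nl i)) (Fin (Nl i)) ℂ)) = blockDiagFst (Cb i))
    (hCb : ∀ i, i ≤ ℓ → ∀ j, IsUnit ((Cb i j).det))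
    -- monolithic preconditioners (smoothers) with invertible blocks, on levels 1,…,ℓ
    (W : (i : ℕ) → Matrix (Fin s × Fin (Nl i)) (Fin s × Fin (Nl i)) ℂ)
    (Wb : (i : ℕ) → Fin s → Matrix (Fin (Nl i)) (Fin (Nl i)) ℂ)
    (hW : ∀ i, 1 ≤ i → i ≤ ℓ →
      (X⁻¹ ⊗ₖ (1 : Matrix (Fin (Nl i)) (Fin (Nl i)) ℂ)) * W i *
        (X ⊗ₖ (1 : Matrix (Fin (Nl i)) (Fin (Nl i)) ℂ)) = blockDiagFst (Wb i))
    (hWb : ∀ i, 1 ≤ i → i ≤ ℓ → ∀ j, IsUnit ((Wb i j).det))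
    -- prolongations and restrictions between consecutive levels
    (P : (i : ℕ) → Matrix (Fin (Nl (i + 1))) (Fin (Nl i)) ℂ)
    (R : (i : ℕ) → Matrix (Fin (Nl i)) (Fin (Nl (i + 1))) ℂ)
    (ν₁ ν₂ γ : ℕ)
    -- the stage-coupled multigrid iteration matrices, with smoother Sᵢ = I − Wᵢ⁻¹ Cᵢ
    (T : (i : ℕ) → Matrix (Fin s × Fin (Nl i)) (Fin s × Fin (Nl i)) ℂ)
    (hT0 : T 0 = 0)
    (hTrec : ∀ i, i < ℓ →
      T (i + 1) =
        (1 - (W (i + 1))⁻¹ * C (i + 1)) ^ ν₁ *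
          (1 - ((1 : Matrix (Fin s) (Fin s) ℂ) ⊗ₖ P i) * (1 - T i ^ γ) * (C i)⁻¹ *
            ((1 : Matrix (Fin s) (Fin s) ℂ) ⊗ₖ R i) * C (i + 1)) *
          (1 - (W (i + 1))⁻¹ * C (i + 1)) ^ ν₂)
    -- the per-stage multigrid iteration matrices, with smoother blocks I − Wᵢⱼ⁻¹ Cᵢⱼ
    (Tb : (i : ℕ) → Fin s → Matrix (Fin (Nl i)) (Fin (Nl i)) ℂ)
    (hTb0 : ∀ j, Tb 0 j = 0)
    (hTbrec : ∀ i, i < ℓ → ∀ j,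
      Tb (i + 1) j =
        (1 - (Wb (i + 1) j)⁻¹ * Cb (i + 1) j) ^ ν₁ *
          (1 - P i * (1 - Tb i j ^ γ) * (Cb i j)⁻¹ * R i * Cb (i + 1) j) *
          (1 - (Wb (i + 1) j)⁻¹ * Cb (i + 1) j) ^ ν₂) :
    (spectralRadius ℂ (T ℓ) = ⨆ j : Fin s, spectralRadius ℂ (Tb ℓ j)) ∧
    (spectralRadius ℂ (T ℓ) < 1 ↔ ∀ j : Fin s, spectralRadius ℂ (Tb ℓ j) < 1) :=
  stmt16_general hX (fun i hi => .of_conj_eq hX (hC i hi)) hCb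
    (fun i h₁ hi => .of_conj_eq hX (hW i h₁ hi)) hWb
    (fun i _ => .one_kronecker X (P i)) (fun i _ => .one_kronecker X (R i)) hT0 hTrec hTb0 hTbrec
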